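/- Let X and Y be finite nonempty sets, let m ≤ |X|, and let Φ : Y^m → ℝ be any performance functional on value-traces. Then for any two deterministic non-repeating search algorithms a₁ and a₂ over X, the total performance summed uniformly over all objective functions is identical: ∑_{f : X → Y} Φ(trace(a₁, f, m)) = ∑_{f : X → Y} Φ(trace(a₂, f, m)). (No-Free-Lunch theorem of Wolpert–Macready: averaged uniformly over all objective functions, no search algorithm outperforms another.) -/

import Mathlib

/-- A deterministic search rule `a : List (X × Y) → X` is *non-repeating* if,
given any history of distinct queried points paired with observed values such
that unqueried points remain, it outputs a point not previously queried. -/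
def NonRepeating {X Y : Type*} [Fintype X] (a : List (X × Y) → X) : Prop :=
  ∀ l : List (X × Y), (l.map Prod.fst).Nodup → l.length < Fintype.card X →
    a l ∉ l.map Prod.fst

/-- Running the algorithm `a` on the objective function `f : X → Y` for `m`
steps: the history of queried points paired with their observed values, in
chronological order. -/
def runAlg {X Y : Type*} (a : List (X × Y) → X) (f : X → Y) : ℕ → List (X × Y)
  | 0 => []
  | m + 1 =>
    let h := runAlg a f m
    h ++ [(a h, f (a h))]

/-- The value-trace `(f x₁, …, f x_m)` produced by running `a` on `f` for `m`
steps. -/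
def valueTrace {X Y : Type*} (a : List (X × Y) → X) (f : X → Y) (m : ℕ) :
    List Y :=
  (runAlg a f m).map Prod.snd

/-!
Knowing the observed values is enough to recover the queries of a deterministic algorithm: feed it
the values one at a time. So `f` produces the trace `l` exactly when `f` agrees with the history
rebuilt from `l`. If `a` never repeats a query and `l` has length `|X|`, that history assigns one
value to each point of `X`, hence is the graph of a unique `f`. Complete traces therefore
parametrise objective functions bijectively, and composing one such bijection with the inverse of
another matches the objectives of `a₁` with those of `a₂` so that all traces agree.
-/

section History

variable {X Y : Type*}

theorem length_runAlg (a : List (X × Y) → X) (f : X → Y) (m : ℕ) :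
    (runAlg a f m).length = m := by
  induction m with
  | zero => rfl
  | succ m ih => simp [runAlg, ih]

theorem length_valueTrace (a : List (X × Y) → X) (f : X → Y) (m : ℕ) :
    (valueTrace a f m).length = m := by
  rw [valueTrace, List.length_map, length_runAlg]

theorem valueTrace_succ (a : List (X × Y) → X) (f : X → Y) (m : ℕ) :
    valueTrace a f (m + 1) = valueTrace a f m ++ [f (a (runAlg a f m))] := by
  simp [valueTrace, runAlg]

theorem take_valueTrace (a : List (X × Y) → X) (f : X → Y) {m n : ℕ} (hmn : m ≤ n) :
    (valueTrace a f n).take m = valueTrace a f m := by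
  induction n, hmn using Nat.le_induction with
  | base => exact List.take_of_length_le (length_valueTrace a f m).le
  | succ n hmn ih =>
    have hlength : m ≤ (valueTrace a f n).length := by rwa [length_valueTrace]
    rw [valueTrace_succ, List.take_append_of_le_length hlength, ih]

theorem apply_fst_eq_snd_of_mem_runAlg {a : List (X × Y) → X} {f : X → Y} {m : ℕ} {p : X × Y}
    (hp : p ∈ runAlg a f m) : f p.1 = p.2 := by
  induction m with
  | zero => simp [runAlg] at hp
  | succ m ih =>
    rw [runAlg, List.mem_append, List.mem_singleton] at hp
    obtain hp | rfl := hp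
    · exact ih hp
    · rfl

/-- The history that the algorithm `a` builds when the values it observes are, in order, the
entries of a prescribed list, with no objective function behind them. -/
def replay (a : List (X × Y) → X) (l : List Y) : List (X × Y) :=
  l.foldl (fun h y => h ++ [(a h, y)]) []

theorem replay_append_singleton (a : List (X × Y) → X) (l : List Y) (y : Y) :
    replay a (l ++ [y]) = replay a l ++ [(a (replay a l), y)] :=
  List.foldl_concat ..

theorem length_replay (a : List (X × Y) → X) (l : List Y) : (replay a l).length = l.length := by
  induction l using List.reverseRecOn with
  | nil => rfl
  | append_singleton l y ih => simp [replay_append_singleton, ih]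

theorem replay_valueTrace (a : List (X × Y) → X) (f : X → Y) (m : ℕ) :
    replay a (valueTrace a f m) = runAlg a f m := by
  induction m with
  | zero => rfl
  | succ m ih => rw [valueTrace_succ, replay_append_singleton, ih, runAlg]

theorem valueTrace_eq_iff_forall_mem_replay (a : List (X × Y) → X) (f : X → Y) (l : List Y) :
    valueTrace a f l.length = l ↔ ∀ p ∈ replay a l, f p.1 = p.2 := by
  constructor
  · intro htrace p hp
    rw [← htrace, replay_valueTrace] at hp
    exact apply_fst_eq_snd_of_mem_runAlg hp
  · intro hagree
    induction l using List.reverseRecOn with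
    | nil => rfl
    | append_singleton l y ih =>
      simp only [replay_append_singleton, List.forall_mem_append, List.forall_mem_singleton]
        at hagree
      obtain ⟨hagree_init, hagree_last⟩ := hagree
      have htrace := ih hagree_init
      have hrun : runAlg a f l.length = replay a l := by rw [← replay_valueTrace, htrace]
      rw [List.length_append, List.length_singleton, valueTrace_succ, htrace, hrun, hagree_last]

end History

section Complete

variable {X Y : Type*} [Fintype X]

theorem existsUnique_forall_mem_apply_fst_eq_snd {h : List (X × Y)}
    (hnodup : (h.map Prod.fst).Nodup) (hlength : h.length = Fintype.card X) :
    ∃! f : X → Y, ∀ p ∈ h, f p.1 = p.2 := by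
  classical
  have huniv : (h.map Prod.fst).toFinset = Finset.univ := by
    rw [← Finset.card_eq_iff_eq_univ, List.toFinset_card_of_nodup hnodup, List.length_map, hlength]
  have hcover (x : X) : ∃ y, (x, y) ∈ h := by
    have hx : x ∈ (h.map Prod.fst).toFinset := huniv ▸ Finset.mem_univ x
    simpa using hx
  choose f hf using hcover
  refine ⟨f, fun p hp => ?_, fun g hg => funext fun x => hg _ (hf x)⟩
  exact congrArg Prod.snd (List.inj_on_of_nodup_map hnodup (hf p.1) hp rfl)

theorem NonRepeating.nodup_map_fst_replay {a : List (X × Y) → X} (ha : NonRepeating a) {l : List Y}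
    (hl : l.length ≤ Fintype.card X) : ((replay a l).map Prod.fst).Nodup := by
  induction l using List.reverseRecOn with
  | nil => exact List.nodup_nil
  | append_singleton l y ih =>
    rw [List.length_append, List.length_singleton] at hl
    have hinit := ih (Nat.le_of_succ_le hl)
    have hfresh := ha _ hinit (by rwa [length_replay])
    rw [replay_append_singleton, List.map_append, List.map_singleton, ← List.concat_eq_append]
    exact hinit.concat hfresh

/-- The trace of `a` on `f` once every point of `X` has been queried, with its length recorded in
the type so that complete traces form the codomain of a bijection. -/
def completeTrace (a : List (X × Y) → X) (f : X → Y) : List.Vector Y (Fintype.card X) :=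
  ⟨valueTrace a f (Fintype.card X), length_valueTrace a f _⟩

theorem NonRepeating.bijective_completeTrace {a : List (X × Y) → X} (ha : NonRepeating a) :
    Function.Bijective (completeTrace a) := by
  refine (Function.bijective_iff_existsUnique _).2 fun ⟨l, hl⟩ => ?_
  have htrace (f : X → Y) : completeTrace a f = ⟨l, hl⟩ ↔ ∀ p ∈ replay a l, f p.1 = p.2 := by
    rw [← valueTrace_eq_iff_forall_mem_replay, hl]
    exact Subtype.ext_iff
  simp only [htrace]
  exact existsUnique_forall_mem_apply_fst_eq_snd (ha.nodup_map_fst_replay hl.le)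
    ((length_replay a l).trans hl)

theorem no_free_lunch_general {a₁ a₂ : List (X × Y) → X}
    (ha₁ : NonRepeating a₁) (ha₂ : NonRepeating a₂) :
    ∃ σ : Equiv.Perm (X → Y), ∀ f, ∀ m ≤ Fintype.card X,
      valueTrace a₁ f m = valueTrace a₂ (σ f) m := by
  let e₁ := Equiv.ofBijective _ ha₁.bijective_completeTrace
  let e₂ := Equiv.ofBijective _ ha₂.bijective_completeTrace
  refine ⟨e₁.trans e₂.symm, fun f m hm => ?_⟩
  have hcomplete : completeTrace a₁ f = completeTrace a₂ (e₂.symm (e₁ f)) :=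
    (e₂.apply_symm_apply (e₁ f)).symm
  calc valueTrace a₁ f m
      = (completeTrace a₁ f).toList.take m := (take_valueTrace a₁ f hm).symm
    _ = (completeTrace a₂ (e₂.symm (e₁ f))).toList.take m := by rw [hcomplete]
    _ = valueTrace a₂ (e₂.symm (e₁ f)) m := take_valueTrace a₂ _ hm

end Complete

/-- **No-Free-Lunch theorem (Wolpert–Macready).**
Let `X` and `Y` be finite nonempty sets, `m ≤ |X|`, and `Φ : Y^m → ℝ` any
performance functional on value-traces.  For any two deterministic
non-repeating search algorithms `a₁` and `a₂` over `X`, the total performance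
summed uniformly over all objective functions `f : X → Y` is identical:
averaged uniformly over all objectives, no search algorithm outperforms
another. -/
theorem no_free_lunch {X Y : Type*} [Fintype X] [Fintype Y]
    [DecidableEq X] [DecidableEq Y] [Nonempty X] [Nonempty Y]
    (m : ℕ) (hm : m ≤ Fintype.card X) (Φ : List Y → ℝ)
    (a₁ a₂ : List (X × Y) → X)
    (ha₁ : NonRepeating a₁) (ha₂ : NonRepeating a₂) :
    ∑ f : X → Y, Φ (valueTrace a₁ f m) = ∑ f : X → Y, Φ (valueTrace a₂ f m) := by
  obtain ⟨σ, hσ⟩ := no_free_lunch_general ha₁ ha₂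
  exact Fintype.sum_equiv σ _ _ fun f => congrArg Φ (hσ f m hm)
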